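/- Suppose Λ̃ = 0. Define the simplified operator H' on finitely supported ψ : ℤ → ℂ by (H'ψ)(n) = (3πG/4)·[ −((v_n−2)² − 2 − α)·ψ(n−1) − ((v_n+2)² − 2 − α)·ψ(n+1) + (2v_n² − 2α)·ψ(n) ]. Then there exists a constant C > 0 such that for every n ∈ ℤ: | c(n) − (3πG/4)·((v_n+2)² − 2 − α) | ≤ C/(1 + v_n²) and | d(n) − (3πG/4)·(2v_n² − 2α) | ≤ C/(1 + v_n²). (Hence the matrix coefficients of the difference H − H' decay at least as fast as v_n⁻².) -/

import Mathlib

/-!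
For large `|v|` write `|v| * B v = 1 + α / v² + O(v⁻⁴)`. The diagonal coefficient is
`2 * K * v² * (|v| * B v)⁻¹` with `K = 3πG/4`, so the expansion of the inverse gives it up to
`O(v⁻²)`. The off-diagonal coefficient becomes symmetric when expressed at the midpoint
`w = v + h` of its two sites: it is `K * w² * √q` with
`q = (1 - h² / w²) * (|w - h| * B (w - h) * (|w + h| * B (w + h)))⁻¹`.
In the product over the sites `w ± h` the odd powers of `w⁻¹` cancel, so that
`q = 1 - (h² + 2 * α) / w² + O(w⁻⁴)`, and the square root halves the second-order term.
Only finitely many sites lie outside the asymptotic regime, and they merely enlarge the constant.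
-/

open Filter Topology Asymptotics Bornology

/-- The first-order expansion `f = 1 + a + O(t²)` along `l`, where the first-order term `a` is
`O(t)`. The term is an arbitrary function, not a multiple of `t`, so that it may be
translated together with `f`. -/
structure HasFirstOrderExpansion {X 𝕜 : Type*} [NormedField 𝕜] (l : Filter X)
    (t f a : X → 𝕜) : Prop where
  term_isBigO : a =O[l] t
  remainder_isBigO : (fun x ↦ f x - 1 - a x) =O[l] fun x ↦ t x ^ 2

namespace HasFirstOrderExpansion

variable {X Y 𝕜 : Type*} [NormedField 𝕜] {l : Filter X} {t s f g a b : X → 𝕜}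

theorem mono (hf : HasFirstOrderExpansion l t f a) (hts : t =O[l] s) :
    HasFirstOrderExpansion l s f a :=
  ⟨hf.term_isBigO.trans hts, hf.remainder_isBigO.trans (hts.pow 2)⟩

theorem comp_tendsto (hf : HasFirstOrderExpansion l t f a) {l' : Filter Y} {u : Y → X}
    (hu : Tendsto u l' l) : HasFirstOrderExpansion l' (t ∘ u) (f ∘ u) (a ∘ u) :=
  ⟨hf.term_isBigO.comp_tendsto hu, hf.remainder_isBigO.comp_tendsto hu⟩

theorem congr_term (hf : HasFirstOrderExpansion l t f a) (hb : b =O[l] t)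
    (hab : (fun x ↦ a x - b x) =O[l] fun x ↦ t x ^ 2) : HasFirstOrderExpansion l t f b :=
  ⟨hb, (hf.remainder_isBigO.add hab).congr_left fun x ↦ by ring⟩

theorem sub_one_isBigO (hf : HasFirstOrderExpansion l t f a) (ht : Tendsto t l (𝓝 0)) :
    (fun x ↦ f x - 1) =O[l] t := by
  have hsq : (fun x ↦ t x ^ 2) =O[l] t :=
    ((isBigO_refl t l).mul (ht.isBigO_one 𝕜)).congr (fun x ↦ (sq (t x)).symm) fun x ↦ mul_one _
  exact ((hf.remainder_isBigO.trans hsq).add hf.term_isBigO).congr_left fun x ↦ by ring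

theorem tendsto_one (hf : HasFirstOrderExpansion l t f a) (ht : Tendsto t l (𝓝 0)) :
    Tendsto f l (𝓝 1) :=
  tendsto_sub_nhds_zero_iff.1 ((hf.sub_one_isBigO ht).trans_tendsto ht)

theorem mul (hf : HasFirstOrderExpansion l t f a) (hg : HasFirstOrderExpansion l t g b)
    (ht : Tendsto t l (𝓝 0)) :
    HasFirstOrderExpansion l t (fun x ↦ f x * g x) fun x ↦ a x + b x := by
  refine ⟨hf.term_isBigO.add hg.term_isBigO, ?_⟩
  have hcross : (fun x ↦ (f x - 1) * (g x - 1)) =O[l] fun x ↦ t x ^ 2 := by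
    simpa only [sq] using (hf.sub_one_isBigO ht).mul (hg.sub_one_isBigO ht)
  exact ((hf.remainder_isBigO.add hg.remainder_isBigO).add hcross).congr_left fun x ↦ by ring

theorem comp {φ : 𝕜 → 𝕜} {γ : 𝕜}
    (hφ : HasFirstOrderExpansion (𝓝 1) (fun y ↦ y - 1) φ fun y ↦ γ * (y - 1))
    (hf : HasFirstOrderExpansion l t f a) (ht : Tendsto t l (𝓝 0)) :
    HasFirstOrderExpansion l t (fun x ↦ φ (f x)) fun x ↦ γ * a x :=
  ((hφ.comp_tendsto (hf.tendsto_one ht)).mono (hf.sub_one_isBigO ht)).congr_term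
    (hf.term_isBigO.const_mul_left γ)
    ((hf.remainder_isBigO.const_mul_left γ).congr_left fun x ↦ by
      simp only [Function.comp_apply]; ring)

theorem inv_nhds_one :
    HasFirstOrderExpansion (𝓝 (1 : 𝕜)) (fun y ↦ y - 1) (fun y ↦ y⁻¹) fun y ↦ -1 * (y - 1) := by
  refine ⟨isBigO_const_mul_self _ _ _, ?_⟩
  have hinv : (fun y : 𝕜 ↦ y⁻¹) =O[𝓝 1] fun _ ↦ (1 : 𝕜) :=
    (tendsto_inv₀ one_ne_zero).isBigO_one 𝕜
  refine ((isBigO_refl (fun y : 𝕜 ↦ (y - 1) ^ 2) _).mul hinv).congr' ?_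
    (.of_forall fun y ↦ mul_one _)
  filter_upwards [eventually_ne_nhds one_ne_zero] with y hy
  field_simp
  ring

theorem sqrt_nhds_one :
    HasFirstOrderExpansion (𝓝 (1 : ℝ)) (fun y ↦ y - 1) (fun y ↦ √y) fun y ↦ 1 / 2 * (y - 1) := by
  refine ⟨isBigO_const_mul_self _ _ _, ?_⟩
  have hsqrt : (fun y : ℝ ↦ √y - 1) =O[𝓝 1] fun y ↦ y - 1 := by
    simpa only [Real.sqrt_one, id] using
      (differentiableAt_id.sqrt (one_ne_zero (α := ℝ))).isBigO_sub
  refine ((hsqrt.pow 2).const_mul_left (-(1 / 2))).congr' ?_ .rfl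
  filter_upwards [eventually_ge_nhds one_pos] with y hy
  linear_combination -(1 / 2) * Real.sq_sqrt hy

end HasFirstOrderExpansion

section Translation

variable {𝕜 : Type*} [NormedField 𝕜]

/-- The expansion `f v = 1 + β / v² + O(v⁻⁴)` as `|v| → ∞`. -/
abbrev HasInvSqExpansion (f : 𝕜 → 𝕜) (β : 𝕜) : Prop :=
  HasFirstOrderExpansion (cobounded 𝕜) (fun v ↦ v⁻¹ ^ 2) f fun v ↦ β * v⁻¹ ^ 2

theorem tendsto_inv_sq_cobounded : Tendsto (fun v : 𝕜 ↦ v⁻¹ ^ 2) (cobounded 𝕜) (𝓝 0) := by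
  simpa using (tendsto_inv₀_cobounded (α := 𝕜)).pow 2

theorem isBigO_inv_add_const_cobounded (h : 𝕜) :
    (fun v : 𝕜 ↦ (v + h)⁻¹) =O[cobounded 𝕜] fun v ↦ v⁻¹ := by
  have hshift : Tendsto (fun v : 𝕜 ↦ v + h) (cobounded 𝕜) (cobounded 𝕜) :=
    tendsto_add_const_cobounded h
  have hconst : (fun _ ↦ h) =O[cobounded 𝕜] fun v ↦ v + h :=
    ((isLittleO_const_id_cobounded h).comp_tendsto hshift).isBigO
  have hid : (fun v ↦ v) =O[cobounded 𝕜] fun v ↦ v + h :=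
    ((isBigO_refl _ _).sub hconst).congr_left fun v ↦ add_sub_cancel_right v h
  exact hid.inv_rev <| (eventually_ne_cobounded 0).mono fun v hv h0 ↦ (hv h0).elim

theorem isBigO_inv_sub_const_cobounded (h : 𝕜) :
    (fun v : 𝕜 ↦ (v - h)⁻¹) =O[cobounded 𝕜] fun v ↦ v⁻¹ := by
  simpa only [sub_eq_add_neg] using isBigO_inv_add_const_cobounded (-h)

theorem isBigO_inv_sq_symmetric_second_difference (h : 𝕜) :
    (fun w : 𝕜 ↦ (w - h)⁻¹ ^ 2 + (w + h)⁻¹ ^ 2 - 2 * w⁻¹ ^ 2) =O[cobounded 𝕜]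
      fun w ↦ (w⁻¹ ^ 2) ^ 2 := by
  have hpq : (fun w : 𝕜 ↦ (w - h)⁻¹ * (w + h)⁻¹) =O[cobounded 𝕜] fun w ↦ w⁻¹ ^ 2 :=
    ((isBigO_inv_sub_const_cobounded h).mul (isBigO_inv_add_const_cobounded h)).congr_right
      fun w ↦ (sq w⁻¹).symm
  have hpqr : (fun w : 𝕜 ↦ (w - h)⁻¹ * (w + h)⁻¹ * w⁻¹ ^ 2) =O[cobounded 𝕜]
      fun w ↦ (w⁻¹ ^ 2) ^ 2 :=
    (hpq.mul (isBigO_refl (fun w : 𝕜 ↦ w⁻¹ ^ 2) _)).congr_right fun w ↦ (sq (w⁻¹ ^ 2)).symm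
  have hidentity : ∀ᶠ w : 𝕜 in cobounded 𝕜,
      4 * h ^ 2 * ((w - h)⁻¹ * (w + h)⁻¹) ^ 2 + 2 * h ^ 2 * ((w - h)⁻¹ * (w + h)⁻¹ * w⁻¹ ^ 2) =
        (w - h)⁻¹ ^ 2 + (w + h)⁻¹ ^ 2 - 2 * w⁻¹ ^ 2 := by
    filter_upwards [eventually_ne_cobounded 0, eventually_ne_cobounded h,
      eventually_ne_cobounded (-h)] with w hw hwh hwnegh
    have hsub : w - h ≠ 0 := sub_ne_zero.2 hwh
    have hadd : w + h ≠ 0 := fun h0 ↦ hwnegh (eq_neg_of_add_eq_zero_left h0)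
    field_simp
    ring
  exact (((hpq.pow 2).const_mul_left (4 * h ^ 2)).add (hpqr.const_mul_left (2 * h ^ 2))).congr'
    hidentity .rfl

theorem HasInvSqExpansion.inv {f : 𝕜 → 𝕜} {β : 𝕜} (hf : HasInvSqExpansion f β) :
    HasInvSqExpansion (fun v ↦ (f v)⁻¹) (-β) := by
  simpa only [HasInvSqExpansion, ← mul_assoc, neg_one_mul] using
    HasFirstOrderExpansion.inv_nhds_one.comp hf tendsto_inv_sq_cobounded

theorem HasInvSqExpansion.mul_symmetric_translates {f : 𝕜 → 𝕜} {α : 𝕜}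
    (hf : HasInvSqExpansion f α) (h : 𝕜) :
    HasInvSqExpansion (fun w ↦ f (w - h) * f (w + h)) (2 * α) := by
  have hsub := (hf.comp_tendsto (tendsto_sub_const_cobounded h)).mono
    ((isBigO_inv_sub_const_cobounded h).pow 2)
  have hadd := (hf.comp_tendsto (tendsto_add_const_cobounded h)).mono
    ((isBigO_inv_add_const_cobounded h).pow 2)
  refine (hsub.mul hadd tendsto_inv_sq_cobounded).congr_term (isBigO_const_mul_self _ _ _) ?_
  refine ((isBigO_inv_sq_symmetric_second_difference h).const_mul_left α).congr_left fun w ↦ ?_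
  simp only [Function.comp_apply]
  ring

theorem HasInvSqExpansion.isBigO_sq_mul_sub {f : 𝕜 → 𝕜} {β : 𝕜} (hf : HasInvSqExpansion f β) :
    (fun v ↦ v ^ 2 * f v - (v ^ 2 + β)) =O[cobounded 𝕜] fun v ↦ v⁻¹ ^ 2 := by
  refine ((isBigO_refl (fun v : 𝕜 ↦ v ^ 2) _).mul hf.remainder_isBigO).congr' ?_ ?_ <;>
    filter_upwards [eventually_ne_cobounded 0] with v hv
  · have hβ : v ^ 2 * (β * v⁻¹ ^ 2) = β := by field_simp
    linear_combination -hβ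
  · field_simp

end Translation

theorem HasInvSqExpansion.sqrt_mul_inv_symmetric_translates {b : ℝ → ℝ} {α : ℝ}
    (hb : HasInvSqExpansion b α) (h : ℝ) :
    HasInvSqExpansion (fun w ↦ √((1 - h ^ 2 * w⁻¹ ^ 2) * (b (w - h) * b (w + h))⁻¹))
      (-(h ^ 2 / 2 + α)) := by
  have hfactor : HasInvSqExpansion (fun w : ℝ ↦ 1 - h ^ 2 * w⁻¹ ^ 2) (-h ^ 2) :=
    ⟨isBigO_const_mul_self _ _ _, (isBigO_zero _ _).congr_left fun w ↦ by ring⟩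
  have hprod := hfactor.mul (hb.mul_symmetric_translates h).inv tendsto_inv_sq_cobounded
  convert HasFirstOrderExpansion.sqrt_nhds_one.comp hprod tendsto_inv_sq_cobounded using 2
  ring

theorem abs_add_add_abs_sub_of_abs_le {v h : ℝ} (hv : |h| ≤ |v|) :
    |v + h| + |v - h| = 2 * |v| := by
  grind

theorem abs_sub_mul_abs_add_of_abs_le {v h : ℝ} (hv : |h| ≤ |v|) :
    |v - h| * |v + h| = v ^ 2 - h ^ 2 := by
  rw [← abs_mul, abs_of_nonneg] <;> nlinarith [sq_le_sq.2 hv]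

section Coefficients

variable {A B : ℝ → ℝ} {K α : ℝ}

/-- The coefficient of `H` coupling the sites `w - h` and `w + h`, as a function of their
midpoint `w`; thus `c n` is the value at `vₙ + 2` for `h = 2`. -/
noncomputable def offDiagonalCoeff (A B : ℝ → ℝ) (h w : ℝ) : ℝ :=
  A w / √(B (w - h) * B (w + h))

/-- The diagonal coefficient of `H` at the site `v` for `Λ̃ = 0`; thus `d n` is the value at `vₙ`
for `h = 2`. -/
noncomputable def diagonalCoeff (A B : ℝ → ℝ) (h v : ℝ) : ℝ :=
  (A (v + h) + A (v - h)) / B v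

theorem diagonalCoeff_sub_isBigO (hA : ∀ᶠ v in cobounded ℝ, A v = K * |v|)
    (hB : HasInvSqExpansion (fun v ↦ |v| * B v) α) (h : ℝ) :
    (fun v ↦ diagonalCoeff A B h v - K * (2 * v ^ 2 - 2 * α)) =O[cobounded ℝ]
      fun v ↦ v⁻¹ ^ 2 := by
  refine (hB.inv.isBigO_sq_mul_sub.const_mul_left (2 * K)).congr' ?_ .rfl
  filter_upwards [(tendsto_add_const_cobounded h).eventually hA,
    (tendsto_sub_const_cobounded h).eventually hA, eventually_cobounded_le_norm |h|,
    eventually_ne_cobounded 0] with v hAadd hAsub hv hv0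
  have hcoeff : diagonalCoeff A B h v = 2 * K * (v ^ 2 * (|v| * B v)⁻¹) := by
    rw [diagonalCoeff, hAadd, hAsub, ← mul_add, abs_add_add_abs_sub_of_abs_le hv, ← sq_abs v]
    have hvabs : |v| ≠ 0 := abs_ne_zero.2 hv0
    field_simp
  rw [hcoeff]
  ring

theorem offDiagonalCoeff_eq_of_abs_lt {h w : ℝ} (hA : A w = K * |w|) (hw : |h| < |w|) :
    offDiagonalCoeff A B h w = K * (w ^ 2 * √((1 - h ^ 2 * w⁻¹ ^ 2) *
      (|w - h| * B (w - h) * (|w + h| * B (w + h)))⁻¹)) := by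
  have hw0 : 0 < |w| := (abs_nonneg h).trans_lt hw
  have hne : w ^ 2 - h ^ 2 ≠ 0 := (sub_pos.2 (sq_lt_sq.2 hw)).ne'
  have hratio : (1 - h ^ 2 * w⁻¹ ^ 2) * (|w - h| * B (w - h) * (|w + h| * B (w + h)))⁻¹ =
      (|w| ^ 2)⁻¹ * (B (w - h) * B (w + h))⁻¹ := by
    rw [mul_mul_mul_comm, abs_sub_mul_abs_add_of_abs_le hw.le, sq_abs]
    have hwne : w ≠ 0 := abs_pos.1 hw0
    field_simp
  rw [offDiagonalCoeff, hA, hratio, Real.sqrt_mul (by positivity : 0 ≤ (|w| ^ 2)⁻¹),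
    Real.sqrt_inv, Real.sqrt_inv, Real.sqrt_sq hw0.le, ← sq_abs w]
  field_simp

theorem offDiagonalCoeff_sub_isBigO (hA : ∀ᶠ v in cobounded ℝ, A v = K * |v|)
    (hB : HasInvSqExpansion (fun v ↦ |v| * B v) α) (h : ℝ) :
    (fun w ↦ offDiagonalCoeff A B h w - K * (w ^ 2 - h ^ 2 / 2 - α)) =O[cobounded ℝ]
      fun w ↦ w⁻¹ ^ 2 := by
  refine ((hB.sqrt_mul_inv_symmetric_translates h).isBigO_sq_mul_sub.const_mul_left K).congr'
    ?_ .rfl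
  filter_upwards [hA, tendsto_norm_cobounded_atTop.eventually_gt_atTop |h|] with w hAw hw
  rw [offDiagonalCoeff_eq_of_abs_lt hAw hw]
  ring

end Coefficients

theorem isBigO_inv_sq_inv_one_add_sq_cobounded :
    (fun v : ℝ ↦ v⁻¹ ^ 2) =O[cobounded ℝ] fun v ↦ (1 + v ^ 2)⁻¹ := by
  refine .of_bound 2 ?_
  filter_upwards [eventually_cobounded_le_norm 1] with v hv
  have hv1 : 1 ≤ v ^ 2 := (one_le_sq_iff_one_le_abs v).2 hv
  rw [inv_pow, Real.norm_of_nonneg (by positivity), Real.norm_of_nonneg (by positivity),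
    ← div_eq_mul_inv, inv_eq_one_div, div_le_div_iff₀ (by positivity) (by positivity)]
  linarith

theorem exists_forall_abs_le_div_one_add_sq {ι : Type*} {v f : ι → ℝ}
    (hv : Tendsto v cofinite (cobounded ℝ)) (hf : f =O[cofinite] fun i ↦ (v i)⁻¹ ^ 2) :
    ∃ C > (0 : ℝ), ∀ i, |f i| ≤ C / (1 + v i ^ 2) := by
  obtain ⟨C, hC, hbound⟩ := bound_of_isBigO_cofinite
    (hf.trans (isBigO_inv_sq_inv_one_add_sq_cobounded.comp_tendsto hv))
  refine ⟨C, hC, fun i ↦ ?_⟩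
  have hpos : 0 < (1 + v i ^ 2)⁻¹ := by positivity
  simpa only [Function.comp_apply, Real.norm_eq_abs, abs_of_pos hpos, ← div_eq_mul_inv] using
    hbound (x := i) hpos.ne'

theorem tendsto_mul_intCast_add_cobounded {q : ℝ} (hq : q ≠ 0) (ε : ℝ) :
    Tendsto (fun n : ℤ ↦ q * (n : ℝ) + ε) cofinite (cobounded ℝ) := by
  have hcast : Tendsto ((↑) : ℤ → ℝ) cofinite (cobounded ℝ) := by
    simpa only [Metric.cobounded_eq_cocompact] using Int.tendsto_coe_cofinite
  exact (tendsto_add_const_cobounded ε).comp ((tendsto_mul_left_cobounded hq).comp hcast)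

theorem aps_coefficients_close_to_simplified_general {ι : Type*} {K α h : ℝ} {A B : ℝ → ℝ}
    (hA : ∀ᶠ v in cobounded ℝ, A v = K * |v|)
    (hB : (fun v ↦ |v| * B v - 1 - α / v ^ 2) =O[cobounded ℝ] fun v ↦ (v ^ 4)⁻¹)
    {v c d : ι → ℝ} (hv : Tendsto v cofinite (cobounded ℝ))
    (hc : ∀ᶠ i in cofinite, c i = A (v i + h) / √(B (v i) * B (v i + 2 * h)))
    (hd : ∀ᶠ i in cofinite, d i = (A (v i + h) + A (v i - h)) / B (v i)) :
    ∃ C > (0 : ℝ), ∀ i,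
      |c i - K * ((v i + h) ^ 2 - h ^ 2 / 2 - α)| ≤ C / (1 + v i ^ 2) ∧
      |d i - K * (2 * v i ^ 2 - 2 * α)| ≤ C / (1 + v i ^ 2) := by
  have hexp : HasInvSqExpansion (fun v ↦ |v| * B v) α :=
    ⟨isBigO_const_mul_self _ _ _, hB.congr (fun v ↦ by rw [inv_pow, div_eq_mul_inv])
      fun v ↦ by rw [inv_pow, inv_pow, ← pow_mul]⟩
  have hoff : (fun i ↦ c i - K * ((v i + h) ^ 2 - h ^ 2 / 2 - α)) =O[cofinite]
      fun i ↦ (v i)⁻¹ ^ 2 := by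
    have hmid := (offDiagonalCoeff_sub_isBigO hA hexp h).comp_tendsto
      ((tendsto_add_const_cobounded h).comp hv)
    refine (hmid.trans (((isBigO_inv_add_const_cobounded h).pow 2).comp_tendsto hv)).congr' ?_ .rfl
    filter_upwards [hc] with i hi
    simp only [Function.comp_apply, offDiagonalCoeff, hi, add_sub_cancel_right, add_assoc, two_mul]
  have hdiag : (fun i ↦ d i - K * (2 * v i ^ 2 - 2 * α)) =O[cofinite] fun i ↦ (v i)⁻¹ ^ 2 :=
    ((diagonalCoeff_sub_isBigO hA hexp h).comp_tendsto hv).congr'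
      (hd.mono fun i hi ↦ by simp only [Function.comp_apply, diagonalCoeff, hi]) .rfl
  obtain ⟨C₁, hC₁, h₁⟩ := exists_forall_abs_le_div_one_add_sq hv hoff
  obtain ⟨C₂, -, h₂⟩ := exists_forall_abs_le_div_one_add_sq hv hdiag
  refine ⟨max C₁ C₂, lt_max_of_lt_left hC₁, fun i ↦ ⟨(h₁ i).trans ?_, (h₂ i).trans ?_⟩⟩
  · gcongr
    exact le_max_left C₁ C₂
  · gcongr
    exact le_max_right C₁ C₂

/-- with Λ̃ = 0, the coefficients of H differ from those of the
simplified operator H' by O(1/(1+vₙ²)). -/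
theorem aps_coefficients_close_to_simplified
    (G ε α Λ : ℝ) (hG : 0 < G) (hε : ε ∈ Set.Ioo (0 : ℝ) 4) (hΛ : Λ = 0)
    (A B : ℝ → ℝ)
    (hA : ∃ R > (0 : ℝ), ∀ v : ℝ, R ≤ |v| → A v = 3 * Real.pi * G / 4 * |v|)
    (hB : ∃ C₀ > (0 : ℝ), ∃ M₀ > (0 : ℝ), ∀ v : ℝ, M₀ ≤ |v| →
      abs (|v| * B v - 1 - α / v ^ 2) ≤ C₀ / v ^ 4)
    (hBpos : ∀ n : ℤ, 0 < B (4 * (n : ℝ) + ε))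
    (c d : ℤ → ℝ)
    (hc : ∀ n : ℤ, c n = A (4 * (n : ℝ) + ε + 2) /
      Real.sqrt (B (4 * (n : ℝ) + ε) * B (4 * ((n : ℝ) + 1) + ε)))
    (hd : ∀ n : ℤ, d n = (A (4 * (n : ℝ) + ε + 2) + A (4 * (n : ℝ) + ε - 2)
      + Λ * |4 * (n : ℝ) + ε|) / B (4 * (n : ℝ) + ε))
    (H : (ℤ → ℂ) → (ℤ → ℂ))
    (hH : ∀ (ψ : ℤ → ℂ) (n : ℤ),
      H ψ n = -(c (n - 1) : ℂ) * ψ (n - 1) - (c n : ℂ) * ψ (n + 1) + (d n : ℂ) * ψ n)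
    :
    ∃ C > (0 : ℝ), ∀ n : ℤ,
      abs (c n - 3 * Real.pi * G / 4 * ((4 * (n : ℝ) + ε + 2) ^ 2 - 2 - α))
          ≤ C / (1 + (4 * (n : ℝ) + ε) ^ 2) ∧
      abs (d n - 3 * Real.pi * G / 4 * (2 * (4 * (n : ℝ) + ε) ^ 2 - 2 * α))
          ≤ C / (1 + (4 * (n : ℝ) + ε) ^ 2) := by
  obtain ⟨R, -, hR⟩ := hA
  obtain ⟨C₀, -, M₀, -, hM⟩ := hB
  have hA' : ∀ᶠ v in cobounded ℝ, A v = 3 * Real.pi * G / 4 * |v| :=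
    (eventually_cobounded_le_norm R).mono hR
  have hB' : (fun v ↦ |v| * B v - 1 - α / v ^ 2) =O[cobounded ℝ] fun v ↦ (v ^ 4)⁻¹ :=
    .of_bound C₀ <| (eventually_cobounded_le_norm M₀).mono fun v hv ↦ by
      rw [Real.norm_eq_abs, Real.norm_of_nonneg (by positivity), ← div_eq_mul_inv]
      exact hM v hv
  convert aps_coefficients_close_to_simplified_general (h := 2) hA' hB'
    (tendsto_mul_intCast_add_cobounded four_ne_zero ε)
    (.of_forall fun n ↦ (hc n).trans ?_) (.of_forall fun n ↦ (hd n).trans ?_) using 7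
  · norm_num
  · ring_nf
  · rw [hΛ, zero_mul, add_zero]
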